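/- Let A_0(t) = 1 and, for n ≥ 1, A_n(t) = ∑_{π ∈ S_n(1̲2̲3)} t^{des(π)+1}, where S_n(1̲2̲3) is the set of permutations of length n with no index i such that π_i < π_{i+1} < π_{i+2}. Define polynomials v_n(t) by v_0 = 1, v_1 = −t, and v_n = −t·v_{n−1} − t·v_{n−2} for n ≥ 2 (so that (1 + tx + tx²)·∑_{n≥0} v_n xⁿ = 1). Then for every n ≥ 1, ∑_{i=0}^{n} binom(n,i)·v_i(t)·A_{n−i}(t) = 0; equivalently, (∑_{n≥0} v_n(t)·xⁿ/n!)·(∑_{n≥0} A_n(t)·xⁿ/n!) = 1 as formal power series in x over ℤ[t]. -/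

import Mathlib

open scoped Classical

/-- The number of descents of a permutation of `Fin n` (one-line notation `π 0, π 1, …`). -/
def des {n : ℕ} (π : Equiv.Perm (Fin n)) : ℕ :=
  (Finset.univ.filter fun i : Fin n =>
    ∃ h : (i : ℕ) + 1 < n, π ⟨(i : ℕ) + 1, h⟩ < π i).card

/-- `π` avoids the consecutive pattern 1̲2̲3: there is no (0-indexed) position `i` with
`i + 2 < n` such that `π_i < π_{i+1} < π_{i+2}`. -/
def AvoidsC123 {n : ℕ} (π : Equiv.Perm (Fin n)) : Prop :=
  ¬ ∃ (i : ℕ) (h : i + 2 < n),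
      π ⟨i, by omega⟩ < π ⟨i + 1, by omega⟩ ∧ π ⟨i + 1, by omega⟩ < π ⟨i + 2, h⟩

/-- `A_0(t) = 1` and, for `n ≥ 1`, `A_n(t) = ∑_{π ∈ S_n(1̲2̲3)} t^{des(π)+1}`. -/
noncomputable def A : ℕ → Polynomial ℚ := fun n =>
  if n = 0 then 1 else
    ∑ π ∈ Finset.univ.filter (fun π : Equiv.Perm (Fin n) => AvoidsC123 π),
      Polynomial.X ^ (des π + 1)

/-- `v_0 = 1`, `v_1 = −t`, and `v_n = −t·v_{n−1} − t·v_{n−2}` for `n ≥ 2`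
(so that `(1 + tx + tx²)·∑_{n≥0} v_n xⁿ = 1`). -/
noncomputable def v : ℕ → Polynomial ℚ
  | 0 => 1
  | 1 => -Polynomial.X
  | n + 2 => -Polynomial.X * v (n + 1) - Polynomial.X * v n

/-- Weight of the length-`m` prefix of `f`. -/
noncomputable def W (f : ℕ → ℕ) (m : ℕ) : Polynomial ℚ :=
  if m = 0 then 1 else
  if (∃ i, i + 2 < m ∧ f i < f (i+1) ∧ f (i+1) < f (i+2)) then 0 else
    Polynomial.X ^ (((Finset.range (m-1)).filter (fun i => ¬ f i < f (i+1))).card + 1)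

/-- The word of a function on `Fin m`. -/
noncomputable def ext {m n : ℕ} (e : Fin m → Fin n) (j : ℕ) : ℕ :=
  if h : j < m then (e ⟨j, h⟩ : ℕ) else 0

/-- The word is increasing on positions `m, …, n - 1`. -/
def Tl (f : ℕ → ℕ) (n m : ℕ) : Prop := ∀ j, m ≤ j → j + 1 < n → f j < f (j+1)

lemma W_congr {f g : ℕ → ℕ} {m : ℕ} (h : ∀ i j, i < m → j < m → (f i < f j ↔ g i < g j)) :
    W f m = W g m := by
  unfold W
  have h1 : (∃ i, i + 2 < m ∧ f i < f (i+1) ∧ f (i+1) < f (i+2)) ↔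
      (∃ i, i + 2 < m ∧ g i < g (i+1) ∧ g (i+1) < g (i+2)) := by
    refine exists_congr fun i => and_congr_right fun hi => ?_
    rw [h i (i+1) (by omega) (by omega), h (i+1) (i+2) (by omega) (by omega)]
  have h2 : (Finset.range (m-1)).filter (fun i => ¬ f i < f (i+1)) =
      (Finset.range (m-1)).filter (fun i => ¬ g i < g (i+1)) := by
    refine Finset.filter_congr fun i hi => ?_
    rw [Finset.mem_range] at hi
    rw [h i (i+1) (by omega) (by omega)]
  simp only [h1, h2]

lemma W_one (f : ℕ → ℕ) (p : ℕ) (hp : p = 0 ∨ ¬ f (p-1) < f p) :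
    W f (p+1) = Polynomial.X * W f p := by
  rcases p with _ | p
  · simp [W]
  · simp only [Nat.add_sub_cancel, Nat.succ_ne_zero, false_or] at hp
    have h1 : (∃ i, i + 2 < p+1+1 ∧ f i < f (i+1) ∧ f (i+1) < f (i+2)) ↔
      (∃ i, i + 2 < p+1 ∧ f i < f (i+1) ∧ f (i+1) < f (i+2)) := by
      constructor
      · rintro ⟨i, hi, h, h'⟩
        refine ⟨i, ?_, h, h'⟩
        by_contra hc
        have : i + 1 = p := by omega
        subst this
        exact hp h'
      · rintro ⟨i, hi, h⟩
        exact ⟨i, by omega, h⟩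
    unfold W
    simp only [h1, Nat.succ_ne_zero, if_false, Nat.add_sub_cancel]
    rw [Finset.range_add_one, Finset.filter_insert, if_pos hp, Finset.card_insert_of_notMem (by simp)]
    split_ifs
    · simp
    · ring

lemma W_two (f : ℕ → ℕ) (p : ℕ) (hp : p = 0 ∨ ¬ f (p-1) < f p) (ha : f p < f (p+1)) :
    W f (p+2) = W f (p+1) := by
  have h1 : (∃ i, i + 2 < p+2 ∧ f i < f (i+1) ∧ f (i+1) < f (i+2)) ↔
      (∃ i, i + 2 < p+1 ∧ f i < f (i+1) ∧ f (i+1) < f (i+2)) := by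
    constructor
    · rintro ⟨i, hi, h, h'⟩
      refine ⟨i, ?_, h, h'⟩
      by_contra hc
      have : i + 1 = p := by omega
      subst this
      simp at hp
      omega
    · rintro ⟨i, hi, h⟩
      exact ⟨i, by omega, h⟩
  unfold W
  have e : p + 2 - 1 = p + 1 := rfl
  simp only [h1, Nat.succ_ne_zero, if_false, Nat.add_sub_cancel, e]
  rw [Finset.range_add_one, Finset.filter_insert, if_neg (not_not.mpr ha : ¬ ¬ f p < f (p+1))]

lemma W_three (f : ℕ → ℕ) (p k : ℕ) (ha : f p < f (p+1)) (hb : f (p+1) < f (p+2)) :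
    W f (p+(k+3)) = 0 := by
  unfold W
  rw [if_neg (by omega), if_pos ⟨p, by omega, ha, hb⟩]

lemma claim2 (f : ℕ → ℕ) (n : ℕ) (hn : 1 ≤ n) :
    ∑ m ∈ Finset.range (n+1), (if Tl f n m then v (n-m) * W f m else 0) = 0 := by
  have hex : ∃ p, Tl f n p := ⟨n, fun j h1 h2 => by omega⟩
  obtain ⟨p, hp, hmin⟩ : ∃ p, Tl f n p ∧ ∀ q < p, ¬ Tl f n q :=
    ⟨Nat.find hex, Nat.find_spec hex, fun q hq => Nat.find_min hex hq⟩
  have hpn : p < n := by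
    by_contra h
    exact hmin (n-1) (by omega) (fun j h1 h2 => by omega)
  have hiff : ∀ m, Tl f n m ↔ p ≤ m := fun m =>
    ⟨fun h => by by_contra hc; exact hmin m (by omega) h, fun h j h1 h2 => hp j (by omega) h2⟩
  have hd : p = 0 ∨ ¬ f (p-1) < f p := by
    by_contra hc
    push Not at hc
    refine hmin (p-1) (by omega) fun j h1 h2 => ?_
    by_cases hj : j = p - 1
    · subst hj
      rw [show p - 1 + 1 = p by omega]; exact hc.2
    · exact hp j (by omega) h2
  simp only [hiff]
  obtain ⟨r, rfl⟩ : ∃ r, n = p + (r + 1) := ⟨n-p-1, by omega⟩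
  rw [add_assoc, Finset.sum_range_add, Finset.sum_eq_zero, zero_add]
  swap
  · intro x hx
    rw [Finset.mem_range] at hx
    rw [if_neg (by omega)]
  simp only [le_add_iff_nonneg_right, zero_le, if_true, Nat.add_sub_add_left]
  rcases r with _ | r
  · simp [Finset.sum_range_succ, W_one f p hd, v]
    try ring
  · have ha : f p < f (p+1) := hp p le_rfl (by omega)
    rw [Finset.sum_range_succ', Finset.sum_range_succ', Finset.sum_range_succ',
      Finset.sum_eq_zero]
    · have e1 := W_one f p hd
      have e2 := W_two f p hd ha
      simp only [zero_add, add_zero, Nat.sub_zero, show r + 1 + 1 - (1+1) = r by omega, 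
        show r + 1 + 1 - 1 = r + 1 by omega, show p + (1+1) = p + 2 by omega, e2, e1]
      rw [show v (r+1+1) = -Polynomial.X * v (r + 1) - Polynomial.X * v r from by rw [v]]
      ring
    · intro x hx
      rw [Finset.mem_range] at hx
      have hb : f (p+1) < f (p+2) := hp (p+1) (by omega) (by omega)
      rw [show p + (x+1+1+1) = p + (x + 3) by omega, W_three f p x ha hb, mul_zero]

lemma A_eq (m : ℕ) : A m = ∑ π : Equiv.Perm (Fin m), W (ext π) m := by
  rcases m with _ | m
  · simp [A, W]
  · unfold A
    rw [if_neg (Nat.succ_ne_zero m), Finset.sum_filter]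
    refine Finset.sum_congr rfl fun π _ => ?_
    unfold W
    rw [if_neg (Nat.succ_ne_zero m)]
    have h1 : AvoidsC123 π ↔
        ¬ (∃ i, i + 2 < m+1 ∧ ext π i < ext π (i+1) ∧ ext π (i+1) < ext π (i+2)) := by
      unfold AvoidsC123
      refine not_congr (exists_congr fun i => ?_)
      constructor
      · rintro ⟨h, h1, h2⟩
        refine ⟨h, ?_⟩
        simp only [ext, h, show i < m+1 by omega, show i + 1 < m + 1 by omega, dif_pos]
        exact ⟨h1, h2⟩
      · rintro ⟨h, h1⟩
        refine ⟨h, ?_⟩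
        simp only [ext, h, show i < m+1 by omega, show i + 1 < m + 1 by omega, dif_pos] at h1
        exact h1
    have h2 : des π = ((Finset.range (m+1-1)).filter (fun i => ¬ ext π i < ext π (i+1))).card := by
      unfold des
      refine Finset.card_bij (fun i _ => (i:ℕ)) ?_ ?_ ?_
      · intro i hi
        simp only [Finset.mem_filter, Finset.mem_univ, true_and] at hi
        obtain ⟨h, hi⟩ := hi
        simp only [Finset.mem_filter, Finset.mem_range]
        refine ⟨by omega, ?_⟩
        simp only [ext, h, i.2, dif_pos, Fin.eta]
        have : (π ⟨i+1, h⟩ : ℕ) < π i := hi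
        omega
      · intro i _ j _ h
        exact Fin.ext h
      · intro i hi
        simp only [Finset.mem_filter, Finset.mem_range] at hi
        obtain ⟨h, hi⟩ := hi
        refine ⟨⟨i, by omega⟩, ?_, rfl⟩
        simp only [Finset.mem_filter, Finset.mem_univ, true_and]
        have h' : i + 1 < m + 1 := by omega
        refine ⟨h', ?_⟩
        simp only [ext, h', show i < m + 1 by omega, dif_pos] at hi
        refine lt_of_le_of_ne (not_lt.mp hi) fun hc => ?_
        have := π.injective hc
        simp at this
    rw [h2]
    by_cases h : AvoidsC123 π
    · rw [if_pos h, if_neg (h1.mp h)]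
    · rw [if_neg h, if_pos (not_not.mp (fun hh => h (h1.mpr hh)))]

lemma emb_sum (n m : ℕ) :
    (n.choose m : Polynomial ℚ) * A m = ∑ e : Fin m ↪ Fin n, W (ext e) m := by
  let F : {T : Finset (Fin n) // T.card = m} × Equiv.Perm (Fin m) → (Fin m ↪ Fin n) :=
    fun x => x.2.toEmbedding.trans (x.1.1.orderEmbOfFin x.1.2).toEmbedding
  have hF : Function.Bijective F := by
    rw [Fintype.bijective_iff_injective_and_card]
    constructor
    · rintro ⟨⟨T, hT⟩, π⟩ ⟨⟨T', hT'⟩, π'⟩ h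
      have hfun : ∀ i, T.orderEmbOfFin hT (π i) = T'.orderEmbOfFin hT' (π' i) := fun i =>
        DFunLike.congr_fun h i
      have hTT : T = T' := by
        ext x
        rw [← Finset.mem_coe, ← Finset.mem_coe, ← Finset.range_orderEmbOfFin T hT,
          ← Finset.range_orderEmbOfFin T' hT']
        constructor
        · rintro ⟨i, rfl⟩
          exact ⟨π' (π.symm i), by rw [← hfun]; simp⟩
        · rintro ⟨i, rfl⟩
          exact ⟨π (π'.symm i), by rw [hfun]; simp⟩
      subst hTT
      have : π = π' := by
        ext i
        rw [(T.orderEmbOfFin hT).injective (hfun i)]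
      rw [this]
    · rw [Fintype.card_prod, Fintype.card_finset_len, Fintype.card_perm, Fintype.card_embedding_eq]
      simp [Nat.descFactorial_eq_factorial_mul_choose, mul_comm]
  rw [← hF.sum_comp (fun e => W (ext e) m), Fintype.sum_prod_type]
  have : ∀ (T : {T : Finset (Fin n) // T.card = m}) (π : Equiv.Perm (Fin m)),
      W (ext (F (T, π))) m = W (ext π) m := by
    intro T π
    apply W_congr
    intro i j hi hj
    simp only [ext, hi, hj, dif_pos]
    exact (T.1.orderEmbOfFin T.2).lt_iff_lt
  simp only [this, ← A_eq, Finset.sum_const, Finset.card_univ, Fintype.card_finset_len,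
    Fintype.card_fin, nsmul_eq_mul]

lemma tail_mono {m k : ℕ} (σ : Equiv.Perm (Fin (m+k))) (h : Tl (ext σ) (m+k) m) :
    StrictMono (fun i : Fin k => σ (Fin.natAdd m i)) := by
  rcases k with _ | k
  · intro i; exact i.elim0
  · rw [Fin.strictMono_iff_lt_succ]
    intro i
    have := h (m+i) (by omega) (by omega)
    simp only [ext, show m + (i:ℕ) < m + (k+1) by omega, show m + (i:ℕ) + 1 < m + (k+1) by omega,
      dif_pos] at this
    exact this

lemma perm_sum (m k : ℕ) :
    ∑ e : Fin m ↪ Fin (m+k), W (ext e) m =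
      ∑ σ : Equiv.Perm (Fin (m+k)), if Tl (ext σ) (m+k) m then W (ext σ) m else 0 := by
  rw [← Finset.sum_filter]
  symm
  refine Finset.sum_bij (fun σ _ => (Fin.castAddEmb k).trans σ.toEmbedding) ?_ ?_ ?_ ?_
  · intros; simp
  · intro σ hσ τ hτ h
    simp only [Finset.mem_filter, Finset.mem_univ, true_and] at hσ hτ
    have h1 : ∀ i : Fin m, σ (Fin.castAdd k i) = τ (Fin.castAdd k i) := fun i =>
      DFunLike.congr_fun h i
    have key : ∀ (σ τ : Equiv.Perm (Fin (m+k))),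
        (∀ i : Fin m, σ (Fin.castAdd k i) = τ (Fin.castAdd k i)) →
        Set.range (fun i : Fin k => σ (Fin.natAdd m i)) ⊆
          Set.range (fun i : Fin k => τ (Fin.natAdd m i)) := by
      rintro σ τ h1 _ ⟨i, rfl⟩
      obtain ⟨y, hy⟩ := τ.surjective (σ (Fin.natAdd m i))
      induction y using Fin.addCases with
      | left y =>
        rw [← h1] at hy
        have := congrArg Fin.val (σ.injective hy)
        simp at this
        omega
      | right y => exact ⟨y, hy⟩
    have h2 := (StrictMono.range_inj (tail_mono σ hσ) (tail_mono τ hτ)).mp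
      (Set.Subset.antisymm (key σ τ h1) (key τ σ fun i => (h1 i).symm))
    ext x
    induction x using Fin.addCases with
    | left x => rw [h1]
    | right x => rw [show σ (Fin.natAdd m x) = τ (Fin.natAdd m x) from congrFun h2 x]
  · intro e _
    have hc : ((Finset.univ.map e)ᶜ).card = k := by
      rw [Finset.card_compl]; simp
    let g := ((Finset.univ.map e)ᶜ).orderEmbOfFin hc
    have hg : ∀ i j, e i ≠ g j := by
      intro i j h
      have := Finset.orderEmbOfFin_mem _ hc j
      rw [Finset.mem_compl] at this
      exact this (by rw [Finset.mem_map]; exact ⟨i, Finset.mem_univ _, h⟩)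
    have hinj : Function.Injective (Fin.append (e : Fin m → Fin (m+k)) g) := by
      intro x y
      induction x using Fin.addCases with
      | left x =>
        induction y using Fin.addCases with
        | left y => simp
        | right y => simp [hg]
      | right x =>
        induction y using Fin.addCases with
        | left y => simpa using fun h => absurd h.symm (hg y x)
        | right y => simp
    refine ⟨Equiv.ofBijective _ (Finite.injective_iff_bijective.mp hinj), ?_, ?_⟩
    · simp only [Finset.mem_filter, Finset.mem_univ, true_and]
      intro j hj1 hj2
      obtain ⟨j, rfl⟩ := Nat.exists_eq_add_of_le hj1
      have e1 : (⟨m + j, by omega⟩ : Fin (m+k)) = Fin.natAdd m ⟨j, by omega⟩ := rfl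
      have e2 : (⟨m + j + 1, hj2⟩ : Fin (m+k)) = Fin.natAdd m ⟨j+1, by omega⟩ := rfl
      simp only [ext, hj2, show m + j < m + k by omega, dif_pos, Equiv.ofBijective_apply, e1, e2,
        Fin.append_right]
      exact g.strictMono (by simp [Fin.lt_def])
    · ext i
      simp
  · intro σ _
    apply W_congr
    intro i j hi hj
    simp only [ext, hi, hj, show i < m + k by omega, show j < m + k by omega, dif_pos]
    rfl

/-- For every `n ≥ 1`, `∑_{i=0}^{n} C(n,i)·v_i(t)·A_{n−i}(t) = 0`; equivalently
`(∑ v_n(t)·xⁿ/n!)·(∑ A_n(t)·xⁿ/n!) = 1` as formal power series in `x`. -/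
theorem statement18 (n : ℕ) (hn : 1 ≤ n) :
    ∑ i ∈ Finset.range (n + 1), (n.choose i : Polynomial ℚ) * v i * A (n - i) = 0 := by
  rw [← Finset.sum_range_reflect]
  have key : ∀ m ∈ Finset.range (n+1),
      (n.choose (n+1-1-m) : Polynomial ℚ) * v (n+1-1-m) * A (n - (n+1-1-m)) =
      ∑ σ : Equiv.Perm (Fin n), if Tl (ext σ) n m then v (n-m) * W (ext σ) m else 0 := by
    intro m hm
    rw [Finset.mem_range] at hm
    obtain ⟨k, rfl⟩ := Nat.exists_eq_add_of_le (show m ≤ n by omega)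
    have := emb_sum (m+k) m
    rw [perm_sum] at this
    rw [show m + k + 1 - 1 - m = k by omega, show m + k - k = m by omega,
      show m + k - m = k by omega, ← Nat.choose_symm_add, mul_right_comm, this, Finset.sum_mul]
    refine Finset.sum_congr rfl fun σ _ => ?_
    split_ifs
    · ring
    · simp
  rw [Finset.sum_congr rfl key, Finset.sum_comm]
  exact Finset.sum_eq_zero fun σ _ => claim2 _ n hn
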